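/- Let a > 1 and let g_a(z) = \sum_{k=0}^\infty z^k a^{-k^2} be the partial theta-function, which is an entire function of order zero with positive coefficients. Then all complex zeros of g_a are real (equivalently, g_a belongs to the Laguerre–Pólya class) if and only if there exists x_0 \in (-a^3, -a) such that g_a(x_0) \le 0. -/

import Mathlib

namespace PTheta

open Filter Topology

/-- The coefficient bound giving growth of order zero (type zero suffices). -/
lemma coeff_bound {q : ℝ} (h0 : 0 < q) (h1 : q < 1) {ε : ℝ} (hε : 0 < ε) :
    ∃ C : ℝ, 1 ≤ C ∧ ∀ k : ℕ, q ^ (k ^ 2) ≤ C * (ε ^ k / (k.factorial : ℝ)) := by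
  have ht := tendsto_self_mul_const_pow_of_lt_one h0.le h1
  have hev : ∀ᶠ k : ℕ in atTop, (k.factorial : ℝ) * q ^ (k ^ 2) / ε ^ k ≤ 1 := by
    filter_upwards [ht.eventually (gt_mem_nhds hε)] with k hk
    rw [div_le_one (by positivity)]
    calc (k.factorial : ℝ) * q ^ (k ^ 2) ≤ (k : ℝ) ^ k * q ^ (k ^ 2) := by
          gcongr; exact_mod_cast Nat.factorial_le_pow k
      _ = ((k : ℝ) * q ^ k) ^ k := by rw [mul_pow, ← pow_mul, sq]
      _ ≤ ε ^ k := by gcongr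
  have hb : IsBoundedUnder (· ≤ ·) atTop (fun k : ℕ => (k.factorial : ℝ) * q ^ (k ^ 2) / ε ^ k) :=
    ⟨1, by simpa using hev⟩
  obtain ⟨C, hC⟩ := hb.bddAbove_range
  refine ⟨max C 1, le_max_right _ _, fun k => ?_⟩
  have := (hC ⟨k, rfl⟩).trans (le_max_left C 1)
  simp only at this
  rw [div_le_iff₀ (by positivity)] at this
  rw [← mul_div_assoc, le_div_iff₀ (by positivity)]
  linarith

lemma summable_real {q : ℝ} (h0 : 0 < q) (h1 : q < 1) (R : ℝ) :
    Summable (fun k : ℕ => q ^ (k ^ 2) * R ^ k) := by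
  obtain ⟨C, hC1, hC⟩ := coeff_bound h0 h1 one_pos
  have := (Real.summable_pow_div_factorial |R|).mul_left C
  refine Summable.of_norm_bounded this fun k => ?_
  rw [Real.norm_eq_abs, abs_mul, abs_pow R, abs_of_pos (by positivity : 0 < q ^ (k ^ 2))]
  calc q ^ (k ^ 2) * |R| ^ k ≤ C * (1 ^ k / (k.factorial : ℝ)) * |R| ^ k := by
        gcongr; exact hC k
    _ = _ := by rw [one_pow]; ring

noncomputable def gR (q x : ℝ) : ℝ := ∑' k : ℕ, q ^ (k ^ 2) * x ^ k

noncomputable def gC (q : ℝ) (z : ℂ) : ℂ := ∑' k : ℕ, (q : ℂ) ^ (k ^ 2) * z ^ k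

lemma norm_term {q : ℝ} (h0 : 0 < q) (z : ℂ) (k : ℕ) :
    ‖(q : ℂ) ^ (k ^ 2) * z ^ k‖ = q ^ (k ^ 2) * ‖z‖ ^ k := by
  rw [norm_mul, norm_pow, norm_pow, Complex.norm_real, Real.norm_eq_abs, abs_of_pos h0]

lemma summable_complex {q : ℝ} (h0 : 0 < q) (h1 : q < 1) (z : ℂ) :
    Summable (fun k : ℕ => (q : ℂ) ^ (k ^ 2) * z ^ k) := by
  refine Summable.of_norm ?_
  simp_rw [norm_term h0]
  exact summable_real h0 h1 _

lemma gC_ofReal (q x : ℝ) : gC q (x : ℂ) = (gR q x : ℂ) := by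
  unfold gC gR
  push_cast
  rfl

lemma norm_gC_le {q : ℝ} (h0 : 0 < q) (h1 : q < 1) (z : ℂ) : ‖gC q z‖ ≤ gR q ‖z‖ := by
  unfold gC gR
  refine (norm_tsum_le_tsum_norm ?_).trans ?_
  · simp_rw [norm_term h0]; exact summable_real h0 h1 _
  · simp_rw [norm_term h0]; exact le_rfl

lemma gR_growth {q : ℝ} (h0 : 0 < q) (h1 : q < 1) {ε : ℝ} (hε : 0 < ε) :
    ∃ C : ℝ, 1 ≤ C ∧ ∀ R : ℝ, 0 ≤ R → gR q R ≤ C * Real.exp (ε * R) := by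
  obtain ⟨C, hC1, hC⟩ := coeff_bound h0 h1 hε
  refine ⟨C, hC1, fun R hR => ?_⟩
  have hs := (Real.summable_pow_div_factorial (ε * R)).mul_left C
  have : C * Real.exp (ε * R) = ∑' k : ℕ, C * ((ε * R) ^ k / (k.factorial : ℝ)) := by
    rw [tsum_mul_left, Real.exp_eq_exp_ℝ, NormedSpace.exp_eq_tsum_div]
  rw [this]
  refine Summable.tsum_le_tsum (fun k => ?_) (summable_real h0 h1 R) hs
  calc q ^ (k ^ 2) * R ^ k ≤ C * (ε ^ k / (k.factorial : ℝ)) * R ^ k := by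
        gcongr; exact hC k
    _ = _ := by rw [mul_pow]; ring

lemma gR_zero (q : ℝ) : gR q 0 = 1 := by
  unfold gR
  rw [tsum_eq_single 0]
  · simp
  · intro k hk; simp [hk]

lemma gC_zero (q : ℝ) : gC q 0 = 1 := by
  have := gC_ofReal q 0
  rw [gR_zero] at this
  simpa using this

/-- power series with the coefficients summable against all powers are entire -/
lemma differentiable_series {c : ℕ → ℂ} (hc : ∀ R : ℝ, Summable (fun k => ‖c k‖ * R ^ k)) :
    Differentiable ℂ (fun z => ∑' k, c k * z ^ k) := by
  intro z
  have : DifferentiableOn ℂ (fun z => ∑' k, c k * z ^ k) (Metric.ball 0 (‖z‖ + 1)) := by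
    refine Complex.differentiableOn_tsum_of_summable_norm (hc (‖z‖ + 1)) (fun k => by fun_prop)
      Metric.isOpen_ball fun k w hw => ?_
    rw [norm_mul, norm_pow]
    have := (mem_ball_zero_iff.mp hw).le
    gcongr
  exact this.differentiableAt (Metric.isOpen_ball.mem_nhds (by simp))

lemma differentiable_gC {q : ℝ} (h0 : 0 < q) (h1 : q < 1) : Differentiable ℂ (gC q) := by
  refine differentiable_series fun R => ?_
  have := summable_real h0 h1 R
  refine this.congr fun k => ?_
  rw [norm_pow, Complex.norm_real, Real.norm_eq_abs, abs_of_pos h0]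

lemma continuous_gR {q : ℝ} (h0 : 0 < q) (h1 : q < 1) : Continuous (gR q) := by
  have : (gR q) = fun x : ℝ => (gC q (x : ℂ)).re := by
    funext x; rw [gC_ofReal]; simp
  rw [this]
  exact Complex.continuous_re.comp ((differentiable_gC h0 h1).continuous.comp Complex.continuous_ofReal)

lemma gR_pos_of_nonneg {q : ℝ} (h0 : 0 < q) (h1 : q < 1) {x : ℝ} (hx : 0 ≤ x) : 0 < gR q x := by
  have := (summable_real h0 h1 x).le_tsum 0 (fun j _ => by positivity)
  simp only [gR]
  simp at this
  linarith

/-- partial sums -/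
noncomputable def S (q : ℝ) (n : ℕ) (x : ℝ) : ℝ := ∑ k ∈ Finset.range n, q ^ (k ^ 2) * x ^ k

lemma S_step (q : ℝ) (m : ℕ) (y : ℝ) :
    S q (2 * (m + 1)) (-y) = S q (2 * m) (-y)
      + q ^ ((2 * m) ^ 2) * y ^ (2 * m) * (1 - q ^ (4 * m + 1) * y) := by
  unfold S
  rw [show 2 * (m + 1) = 2 * m + 1 + 1 by ring, Finset.sum_range_succ, Finset.sum_range_succ]
  have e : (2 * m + 1) ^ 2 = (2 * m) ^ 2 + (4 * m + 1) := by ring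
  have h1 : (-y) ^ (2 * m) = y ^ (2 * m) := by rw [pow_mul, pow_mul]; simp
  rw [e, pow_succ (-y), h1, pow_add]
  ring

lemma S_step_lt {q y : ℝ} (h0 : 0 < q) (h1 : q < 1) (hy : 0 < y) (hy5 : q ^ 5 * y < 1) {m : ℕ}
    (hm : 1 ≤ m) : S q (2 * m) (-y) < S q (2 * (m + 1)) (-y) := by
  rw [S_step]
  have : q ^ (4 * m + 1) ≤ q ^ 5 := pow_le_pow_of_le_one h0.le h1.le (by omega)
  have h2 : q ^ (4 * m + 1) * y ≤ q ^ 5 * y := by gcongr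
  have : 0 < q ^ ((2 * m) ^ 2) * y ^ (2 * m) * (1 - q ^ (4 * m + 1) * y) := by
    apply mul_pos (by positivity); linarith
  linarith

lemma S_lt_gR {q y : ℝ} (h0 : 0 < q) (h1 : q < 1) (hy : 0 < y) (hy5 : q ^ 5 * y < 1) {m : ℕ}
    (hm : 1 ≤ m) : S q (2 * m) (-y) < gR q (-y) := by
  refine (S_step_lt h0 h1 hy hy5 hm).trans_le ?_
  have ht : Tendsto (fun j : ℕ => S q (2 * (j + (m + 1))) (-y)) atTop (𝓝 (gR q (-y))) := by
    have := (summable_real h0 h1 (-y)).hasSum.tendsto_sum_nat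
    refine this.comp (tendsto_atTop_mono (fun j => ?_) tendsto_id)
    simp only [id]; omega
  have hmono : Monotone (fun j : ℕ => S q (2 * (j + (m + 1))) (-y)) := by
    refine monotone_nat_of_le_succ fun j => ?_
    have := S_step_lt h0 h1 hy hy5 (m := j + (m + 1)) (by omega)
    rw [show j + 1 + (m + 1) = j + (m + 1) + 1 by ring]
    exact this.le
  have := hmono.ge_of_tendsto ht 0
  simpa using this

lemma gR_pos_small {q y : ℝ} (h0 : 0 < q) (h1 : q < 1) (hy : 0 ≤ y) (hy1 : q * y ≤ 1) :
    0 < gR q (-y) := by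
  rcases hy.eq_or_lt with rfl | hy
  · simp [gR_zero]
  have h5 : q ^ 5 * y < 1 := by
    have : q ^ 4 < 1 := pow_lt_one₀ h0.le h1 (by norm_num)
    calc q ^ 5 * y = q ^ 4 * (q * y) := by ring
      _ < 1 * (q * y) := by gcongr
      _ ≤ 1 := by linarith
  have := S_lt_gR h0 h1 hy h5 (m := 1) le_rfl
  simp [S, Finset.sum_range_succ] at this
  linarith

lemma gR_pos_cube {q y : ℝ} (h0 : 0 < q) (h1 : q < 1) (hy1 : q ^ 3 * y = 1) :
    0 < gR q (-y) := by
  have hy : 0 < y := by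
    by_contra h
    have : q ^ 3 * y ≤ 0 := mul_nonpos_of_nonneg_of_nonpos (by positivity) (by linarith)
    linarith
  have h5 : q ^ 5 * y < 1 := by
    have : q ^ 2 < 1 := pow_lt_one₀ h0.le h1 (by norm_num)
    calc q ^ 5 * y = q ^ 2 * (q ^ 3 * y) := by ring
      _ < 1 := by rw [hy1]; linarith
  have := S_lt_gR h0 h1 hy h5 (m := 2) (by norm_num)
  have e : S q (2 * 2) (-y) = 0 := by
    have e1 : S q (2 * 2) (-y) = 1 - (q ^ 3 * y) ^ 3 + q * y * ((q ^ 3 * y) - 1) := by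
      simp [S, Finset.sum_range_succ]; ring
    rw [e1, hy1]; ring
  linarith

/-- the existence of the point forces `a ^ 2 ≥ 3` -/
lemma q_sq_le {q y : ℝ} (h0 : 0 < q) (h1 : q < 1) (hy0 : 0 < y) (hy : q ^ 3 * y < 1)
    (hg : gR q (-y) ≤ 0) : 3 * q ^ 2 ≤ 1 := by
  have h5 : q ^ 5 * y < 1 := by
    have : q ^ 2 < 1 := pow_lt_one₀ h0.le h1 (by norm_num)
    calc q ^ 5 * y = q ^ 2 * (q ^ 3 * y) := by ring
      _ < 1 * 1 := by gcongr
      _ = 1 := by ring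
  have h4 := S_lt_gR h0 h1 hy0 h5 (m := 2) (by norm_num)
  set s := q ^ 3 * y with hs
  have hs0 : 0 < s := by positivity
  have e1 : q ^ 2 * S q (2 * 2) (-y) = (1 - s) * (q ^ 2 * (1 + s + s ^ 2) - s) := by
    simp [S, Finset.sum_range_succ, hs]; ring
  have h2 : (1 - s) * (q ^ 2 * (1 + s + s ^ 2) - s) < 0 := by
    rw [← e1]; apply mul_neg_of_pos_of_neg (by positivity); linarith
  have h3 : q ^ 2 * (1 + s + s ^ 2) - s < 0 := by
    by_contra h
    have := mul_nonneg (show 0 ≤ 1 - s by linarith) (not_lt.mp h)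
    linarith
  have h6 : q ^ 2 * (3 * s) ≤ q ^ 2 * (1 + s + s ^ 2) := by
    gcongr; nlinarith [sq_nonneg (s - 1)]
  have h7 : (3 * q ^ 2) * s ≤ 1 * s := by linarith
  exact le_of_mul_le_mul_right h7 hs0

end PTheta

namespace PTheta

open Filter Topology

/-- one-sided alternating theta sums -/
noncomputable def T (q : ℝ) (N : ℕ) : ℝ :=
  ∑ m ∈ Finset.range N, (-1) ^ (m + 1) * q ^ ((m + 1) ^ 2)

lemma T_odd {q : ℝ} (h0 : 0 < q) (h1 : q < 1) (N : ℕ) :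
    -q + q ^ 4 - q ^ 9 ≤ T q (2 * N + 3) := by
  induction N with
  | zero => simp [T, Finset.sum_range_succ]; linarith
  | succ N ih =>
    have e : T q (2 * (N + 1) + 3) = T q (2 * N + 3) + q ^ ((2 * N + 4) ^ 2)
        - q ^ ((2 * N + 5) ^ 2) := by
      unfold T
      rw [show 2 * (N + 1) + 3 = 2 * N + 3 + 1 + 1 by ring, Finset.sum_range_succ,
        Finset.sum_range_succ]
      rw [show (-1 : ℝ) ^ (2 * N + 3 + 1) = 1 from Even.neg_one_pow ⟨N + 2, by ring⟩,
        show (-1 : ℝ) ^ (2 * N + 3 + 1 + 1) = -1 from Odd.neg_one_pow ⟨N + 2, by ring⟩]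
      ring_nf
    have : q ^ ((2 * N + 5) ^ 2) ≤ q ^ ((2 * N + 4) ^ 2) :=
      pow_le_pow_of_le_one h0.le h1.le (by gcongr; omega)
    linarith

lemma T_ge {q : ℝ} (h0 : 0 < q) (h1 : q < 1) {N : ℕ} (hN : 2 ≤ N) :
    -q + q ^ 4 - q ^ 9 ≤ T q N := by
  rcases Nat.even_or_odd' N with ⟨k, rfl | rfl⟩
  · rcases Nat.lt_or_ge k 2 with h | h
    · have : k = 1 := by omega
      subst this
      have hT : T q (2 * 1) = -q + q ^ 4 := by simp [T, Finset.sum_range_succ]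
      rw [hT]
      have : 0 < q ^ 9 := by positivity
      linarith
    · obtain ⟨j, rfl⟩ := Nat.exists_eq_add_of_le h
      have := T_odd h0 h1 j
      have e : T q (2 * (2 + j)) = T q (2 * j + 3) + q ^ ((2 * j + 4) ^ 2) := by
        unfold T
        rw [show 2 * (2 + j) = 2 * j + 3 + 1 by ring, Finset.sum_range_succ]
        rw [show (-1 : ℝ) ^ (2 * j + 3 + 1) = 1 from Even.neg_one_pow ⟨j + 2, by ring⟩]
        ring_nf
      have : 0 < q ^ ((2 * j + 4) ^ 2) := by positivity
      linarith
  · obtain ⟨j, rfl⟩ := Nat.exists_eq_add_of_le (show 1 ≤ k by omega)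
    have := T_odd h0 h1 j
    rwa [show 2 * (1 + j) + 1 = 2 * j + 3 by ring]

lemma num_pos {q : ℝ} (h0 : 0 < q) (h3 : 3 * q ^ 2 ≤ 1) :
    0 < 1 + 2 * (-q + q ^ 4 - q ^ 9) := by
  have hq : q < 0.5774 := by nlinarith
  have h5 : q ^ 5 ≤ 0.065 := by
    calc q ^ 5 ≤ 0.5774 ^ 5 := by gcongr
      _ ≤ 0.065 := by norm_num
  have : q ^ 9 ≤ 0.065 * q ^ 4 := by
    calc q ^ 9 = q ^ 5 * q ^ 4 := by ring
      _ ≤ _ := by gcongr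
  have : 0 < 1 - 2 * q + 1.87 * q ^ 4 := by
    nlinarith [sq_nonneg (q ^ 2 - 1/3), sq_nonneg (q - 0.5774)]
  linarith

/-- sign of the section at `-a^(2j)` -/
lemma S_at {q b : ℝ} (h0 : 0 < q) (hb : q * b = 1) (j l : ℕ) :
    (-1) ^ j * S q (j + l + 1) (-(b ^ (2 * j))) = b ^ (j ^ 2) * (1 + T q j + T q l) := by
  have key : ∀ k : ℕ, ∀ d : ℕ, (k + d = j ∨ j + d = k) →
      (-1 : ℝ) ^ j * (q ^ (k ^ 2) * (-(b ^ (2 * j))) ^ k)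
        = b ^ (j ^ 2) * ((-1) ^ d * q ^ (d ^ 2)) := by
    intro k d h
    have e1 : (-(b ^ (2 * j))) ^ k = (-1) ^ k * b ^ (2 * j * k) := by
      rw [neg_pow, ← pow_mul]
    have s1 : (-1 : ℝ) ^ j * (-1) ^ k = (-1) ^ d := by
      rcases h with rfl | rfl
      · rw [pow_add, mul_right_comm, ← mul_pow]; simp
      · rw [pow_add, ← mul_assoc, ← mul_pow]; simp
    have s2 : k ^ 2 + j ^ 2 = d ^ 2 + 2 * j * k := by
      rcases h with rfl | rfl <;> ring
    have hbp : b ≠ 0 := by rintro rfl; simp at hb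
    have s3 : q ^ (k ^ 2) * b ^ (2 * j * k) = b ^ (j ^ 2) * q ^ (d ^ 2) := by
      have hq : q = b⁻¹ := eq_inv_of_mul_eq_one_left hb
      rw [hq, inv_pow, inv_pow]
      field_simp
      rw [← pow_add, ← pow_add]
      congr 1
      linarith
    rw [e1, ← s1]
    calc _ = (-1) ^ j * (-1) ^ k * (q ^ (k ^ 2) * b ^ (2 * j * k)) := by ring
      _ = _ := by rw [s3]; ring
  unfold S
  rw [Finset.mul_sum, show j + l + 1 = j + (l + 1) by ring, Finset.sum_range_add,
    Finset.sum_range_succ' (fun x => (-1 : ℝ) ^ j * (q ^ ((j + x) ^ 2) * (-(b ^ (2 * j))) ^ (j + x))),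
    ← Finset.sum_range_reflect]
  have A : ∑ i ∈ Finset.range j, (-1 : ℝ) ^ j * (q ^ ((j - 1 - i) ^ 2) *
      (-(b ^ (2 * j))) ^ (j - 1 - i)) = b ^ (j ^ 2) * T q j := by
    unfold T
    rw [Finset.mul_sum]
    refine Finset.sum_congr rfl fun i hi => ?_
    have := Finset.mem_range.mp hi
    exact key _ _ (Or.inl (by omega))
  have B : ∑ i ∈ Finset.range l, (-1 : ℝ) ^ j * (q ^ ((j + (i + 1)) ^ 2) *
      (-(b ^ (2 * j))) ^ (j + (i + 1))) = b ^ (j ^ 2) * T q l := by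
    unfold T
    rw [Finset.mul_sum]
    refine Finset.sum_congr rfl fun i hi => ?_
    exact key _ _ (Or.inr rfl)
  rw [A, B, key (j + 0) 0 (Or.inr rfl)]
  simp
  ring

lemma S_at_pos {q b : ℝ} (h0 : 0 < q) (h1 : q < 1) (hb : q * b = 1) (h3 : 3 * q ^ 2 ≤ 1)
    {j l : ℕ} (hj : 2 ≤ j) (hl : 2 ≤ l) :
    0 < (-1) ^ j * S q (j + l + 1) (-(b ^ (2 * j))) := by
  have hbp : 0 < b := by
    by_contra h
    have : q * b ≤ 0 := mul_nonpos_of_nonneg_of_nonpos h0.le (not_lt.mp h)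
    linarith
  rw [S_at h0 hb]
  apply mul_pos (by positivity)
  have := T_ge h0 h1 hj
  have := T_ge h0 h1 hl
  have := num_pos h0 h3
  linarith

/-- self-reciprocity -/
lemma S_recip {q b : ℝ} (hb : q * b = 1) (n : ℕ) {y : ℝ} (hy : y ≠ 0) :
    y ^ n * S q (n + 1) (-(b ^ (2 * n) / y)) = (-1) ^ n * b ^ (n ^ 2) * S q (n + 1) (-y) := by
  have hbp : b ≠ 0 := by rintro rfl; simp at hb
  have hq : q = b⁻¹ := eq_inv_of_mul_eq_one_left hb
  unfold S
  rw [← Finset.sum_range_reflect, Finset.mul_sum, Finset.mul_sum]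
  refine Finset.sum_congr rfl fun i hi => ?_
  have hi := Finset.mem_range.mp hi
  obtain ⟨d, rfl⟩ : ∃ d, n = i + d := Nat.exists_eq_add_of_le (by omega)
  rw [show i + d + 1 - 1 - i = d by omega]
  rw [neg_pow (b ^ (2 * (i + d)) / y), neg_pow y, hq]
  have s1 : (-1 : ℝ) ^ (i + d) * (-1) ^ i = (-1) ^ d := by
    rw [pow_add, mul_right_comm, ← mul_pow]; simp
  rw [← s1, div_pow, ← pow_mul, pow_add y, inv_pow, inv_pow]
  field_simp
  ring

/-- sign far away -/
lemma S_far {q b : ℝ} (h0 : 0 < q) (h1 : q < 1) (hb : q * b = 1) (m : ℕ) :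
    S q (2 * (m + 1)) (-(b ^ (2 * (2 * m + 1)))) < 0 := by
  have hq : q = b⁻¹ := eq_inv_of_mul_eq_one_left hb
  have hb0 : 0 < b := by rw [hq] at h0; exact inv_pos.mp h0
  have hb1 : 1 < b := by
    by_contra h
    have : q * b < 1 := by nlinarith
    linarith
  set y := b ^ (2 * (2 * m + 1)) with hy
  have hy0 : 0 < y := by positivity
  have hqy : ∀ i ≤ m, 1 < q ^ (4 * i + 1) * y := by
    intro i hi
    obtain ⟨d, rfl⟩ := Nat.exists_eq_add_of_le hi
    have : q ^ (4 * i + 1) * y = (q * b) ^ (4 * i + 1) * b ^ (4 * d + 1) := by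
      rw [hy, mul_pow, mul_assoc, ← pow_add]; congr 2; ring
    rw [this, hb, one_pow, one_mul]
    exact one_lt_pow₀ hb1 (by omega)
  have : ∀ i ≤ m, S q (2 * (i + 1)) (-y) < 0 := by
    intro i
    induction i with
    | zero =>
      intro h
      have := hqy 0 h
      simp [S, Finset.sum_range_succ] at this ⊢
      linarith
    | succ i ih =>
      intro h
      have h2 := ih (by omega)
      rw [S_step]
      have h3 := hqy _ h
      have : 0 < q ^ ((2 * (i + 1)) ^ 2) * y ^ (2 * (i + 1)) * (q ^ (4 * (i + 1) + 1) * y - 1) := by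
        apply mul_pos (by positivity); linarith
      linarith
  exact this m le_rfl

/-- all the sign points -/
lemma sign_points {q b y₀ : ℝ} (h0 : 0 < q) (h1 : q < 1) (hb : q * b = 1)
    (hy1 : b < y₀) (hy3 : y₀ < b ^ 3) (hg : gR q (-y₀) ≤ 0) (m : ℕ) (i : ℕ) (hi : i ≤ 2 * m + 5) :
    ∃ y : ℝ, (i ≠ 0 → b ^ (2 * i) < b * y) ∧ y < b ^ (2 * i + 1) ∧
      0 < (-1) ^ i * S q (2 * m + 6) (-y) := by
  have hq : q = b⁻¹ := eq_inv_of_mul_eq_one_left hb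
  have hb0 : 0 < b := by rw [hq] at h0; exact inv_pos.mp h0
  have hb1 : 1 < b := by
    by_contra h
    have : q * b < 1 := by nlinarith
    linarith
  have hy0 : 0 < y₀ := hb0.trans hy1
  have hqy : q ^ 3 * y₀ < 1 := by
    calc q ^ 3 * y₀ < q ^ 3 * b ^ 3 := by gcongr
      _ = 1 := by rw [← mul_pow, hb, one_pow]
  have h3 : 3 * q ^ 2 ≤ 1 := q_sq_le h0 h1 hy0 hqy hg
  have h5 : q ^ 5 * y₀ < 1 := by
    have : q ^ 2 < 1 := pow_lt_one₀ h0.le h1 (by norm_num)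
    calc q ^ 5 * y₀ = q ^ 2 * (q ^ 3 * y₀) := by ring
      _ < 1 * 1 := by gcongr
      _ = 1 := by ring
  have hS0 : S q (2 * m + 6) (-y₀) < 0 := by
    have := S_lt_gR h0 h1 hy0 h5 (m := m + 3) (by omega)
    rw [show 2 * m + 6 = 2 * (m + 3) by ring]
    linarith
  have mid : ∀ j, b ^ (2 * j) < b * b ^ (2 * j) ∧ b ^ (2 * j) < b ^ (2 * j + 1) := by
    intro j
    have : 0 < b ^ (2 * j) := by positivity
    rw [pow_succ]
    constructor <;> nlinarith
  rcases Nat.eq_zero_or_pos i with rfl | hi0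
  · refine ⟨0, by simp, by positivity, ?_⟩
    have : S q (2 * m + 6) (-0) = 1 := by
      unfold S
      rw [Finset.sum_eq_single 0]
      · simp
      · intro k _ hk; simp [hk]
      · simp
    rw [this]; simp
  rcases (show i = 1 ∨ 2 ≤ i by omega) with rfl | hi2
  · refine ⟨y₀, fun _ => by rw [mul_one, sq]; gcongr, hy3, ?_⟩
    simp; linarith
  rcases (show i = 2 * m + 5 ∨ i = 2 * m + 4 ∨ i ≤ 2 * m + 3 by omega) with rfl | rfl | hi3
  · refine ⟨b ^ (2 * (2 * m + 5)), fun _ => (mid _).1, (mid _).2, ?_⟩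
    have := S_far h0 h1 hb (m + 2)
    rw [show (-1 : ℝ) ^ (2 * m + 5) = -1 from Odd.neg_one_pow ⟨m + 2, by ring⟩]
    rw [show 2 * m + 6 = 2 * (m + 2 + 1) by ring, show 2 * m + 5 = 2 * (m + 2) + 1 by ring]
    linarith
  · refine ⟨b ^ (2 * (2 * m + 5)) / y₀, fun _ => ?_, ?_, ?_⟩
    · rw [← mul_div_assoc, lt_div_iff₀ hy0]
      calc b ^ (2 * (2 * m + 4)) * y₀ < b ^ (2 * (2 * m + 4)) * b ^ 3 := by gcongr
        _ = _ := by ring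
    · rw [div_lt_iff₀ hy0]
      calc b ^ (2 * (2 * m + 5)) = b ^ (2 * (2 * m + 4) + 1) * b := by ring
        _ < _ := by gcongr
    · have := S_recip hb (2 * m + 5) hy0.ne'
      rw [show (-1 : ℝ) ^ (2 * m + 5) = -1 from Odd.neg_one_pow ⟨m + 2, by ring⟩] at this
      rw [show (-1 : ℝ) ^ (2 * m + 4) = 1 from Even.neg_one_pow ⟨m + 2, by ring⟩, one_mul]
      have h6 : 0 < -1 * b ^ ((2 * m + 5) ^ 2) * S q (2 * m + 5 + 1) (-y₀) := by
        have := mul_neg_of_pos_of_neg (show 0 < b ^ ((2 * m + 5) ^ 2) by positivity) hS0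
        linarith
      rw [← this] at h6
      exact pos_of_mul_pos_right h6 (by positivity)
  · refine ⟨b ^ (2 * i), fun _ => (mid _).1, (mid _).2, ?_⟩
    have := S_at_pos h0 h1 hb h3 hi2 (l := 2 * m + 5 - i) (by omega)
    rwa [show i + (2 * m + 5 - i) + 1 = 2 * m + 6 by omega] at this

open Polynomial in
/-- a real polynomial with enough sign changes splits -/
lemma splits_of_signs (P : ℝ[X]) (n : ℕ) (hn : P.natDegree ≤ n) (hP : P ≠ 0) (y : ℕ → ℝ)
    (hy : ∀ i < n, y i < y (i + 1)) (hs : ∀ i ≤ n, 0 < (-1) ^ i * P.eval (-(y i))) :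
    P.Splits := by
  have hroot : ∀ i : Fin n, ∃ x : ℝ, y i < x ∧ x < y (i + 1) ∧ P.eval (-x) = 0 := by
    intro i
    have hi := i.2
    have hlt := hy i hi
    have ha := hs i hi.le
    have hb := hs (i + 1) hi
    have hc : ContinuousOn (fun x => (-1) ^ (i : ℕ) * P.eval (-x)) (Set.Icc (y i) (y (i + 1))) := by
      apply Continuous.continuousOn
      fun_prop
    have : (0 : ℝ) ∈ Set.Ioo ((-1) ^ (i : ℕ) * P.eval (-(y (i + 1))))
        ((-1) ^ (i : ℕ) * P.eval (-(y i))) := by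
      refine ⟨?_, ha⟩
      rw [pow_succ] at hb
      linarith
    obtain ⟨x, hx, hx0⟩ := intermediate_value_Ioo' hlt.le hc this
    refine ⟨x, hx.1, hx.2, ?_⟩
    simpa using hx0
  choose x hx1 hx2 hx3 using hroot
  have hmono : ∀ i j : ℕ, i ≤ j → j ≤ n → y i ≤ y j := by
    intro i j hij
    induction j, hij using Nat.le_induction with
    | base => intro _; exact le_rfl
    | succ j hj ih => intro h; exact (ih (by omega)).trans (hy j (by omega)).le
  have hinj : Function.Injective (fun i : Fin n => -(x i)) := by
    have hsm : StrictMono x := by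
      intro i j hij
      have := hmono (i + 1) j hij j.2.le
      exact (hx2 i).trans_le (this.trans (hx1 j).le)
    intro i j hij
    exact hsm.injective (neg_injective hij)
  have hsub : Finset.univ.image (fun i : Fin n => -(x i)) ⊆ P.roots.toFinset := by
    intro r hr
    obtain ⟨i, -, rfl⟩ := Finset.mem_image.mp hr
    rw [Multiset.mem_toFinset, mem_roots hP]
    exact hx3 i
  have hcard : n ≤ P.roots.card := by
    have := Finset.card_le_card hsub
    rw [Finset.card_image_of_injective _ hinj, Finset.card_univ, Fintype.card_fin] at this
    exact this.trans (Multiset.toFinset_card_le _)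
  rw [splits_iff_card_roots]
  exact le_antisymm (card_roots' P) (hn.trans hcard)

open Polynomial in
lemma splits_norm_mono (P : ℝ[X]) (hP : P.Splits) (u v w : ℝ) (h : |w| ≤ |v|) :
    ‖aeval (⟨u, w⟩ : ℂ) P‖ ≤ ‖aeval (⟨u, v⟩ : ℂ) P‖ := by
  rw [hP.eq_prod_roots]
  simp only [map_mul, aeval_C, norm_mul]
  gcongr
  rw [map_multiset_prod, map_multiset_prod, Multiset.map_map, Multiset.map_map]
  induction P.roots using Multiset.induction with
  | empty => simp
  | cons r s ih =>
    simp only [Multiset.map_cons, Multiset.prod_cons, norm_mul]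
    gcongr
    simp only [Function.comp, map_sub, aeval_X, aeval_C]
    rw [Complex.norm_def, Complex.norm_def]
    apply Real.sqrt_le_sqrt
    simp only [Complex.normSq_apply]
    have := sq_le_sq.mpr h
    simp
    nlinarith

open Polynomial in
noncomputable def SP (q : ℝ) (n : ℕ) : ℝ[X] := ∑ k ∈ Finset.range n, C (q ^ (k ^ 2)) * X ^ k

lemma SP_eval (q : ℝ) (n : ℕ) (x : ℝ) : (SP q n).eval x = S q n x := by
  simp [SP, S, Polynomial.eval_finsetSum]

lemma SP_aeval (q : ℝ) (n : ℕ) (z : ℂ) :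
    Polynomial.aeval z (SP q n) = ∑ k ∈ Finset.range n, (q : ℂ) ^ (k ^ 2) * z ^ k := by
  simp [SP]

theorem real_zeros_of_point {q b y₀ : ℝ} (h0 : 0 < q) (h1 : q < 1) (hb : q * b = 1)
    (hy1 : b < y₀) (hy3 : y₀ < b ^ 3) (hg : gR q (-y₀) ≤ 0) (z : ℂ) (hz : gC q z = 0) :
    z.im = 0 := by
  have hq : q = b⁻¹ := eq_inv_of_mul_eq_one_left hb
  have hb0 : 0 < b := by rw [hq] at h0; exact inv_pos.mp h0
  have hsp : ∀ m : ℕ, (SP q (2 * m + 6)).Splits := by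
    intro m
    have hp := sign_points h0 h1 hb hy1 hy3 hg m
    choose! y hya hyb hyc using hp
    have hne : SP q (2 * m + 6) ≠ 0 := by
      intro h
      have := hyc 0 (by omega)
      rw [← SP_eval, h] at this
      simp at this
    refine splits_of_signs _ (2 * m + 5) ?_ hne y ?_ ?_
    · unfold SP
      refine Polynomial.natDegree_sum_le_of_forall_le _ _ fun k hk => ?_
      have := Finset.mem_range.mp hk
      exact (Polynomial.natDegree_C_mul_X_pow_le _ _).trans (by omega)
    · intro i hi
      have h2 := hyb i (by omega)
      have h3 := hya (i + 1) (by omega) (by omega)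
      have h4 : b * b ^ (2 * i + 1) < b * y (i + 1) := by
        calc _ = b ^ (2 * (i + 1)) := by ring
          _ < _ := h3
      exact h2.trans (lt_of_mul_lt_mul_left h4 hb0.le)
    · intro i hi
      rw [SP_eval]
      exact hyc i hi
  have hlim : ∀ w : ℂ, Tendsto (fun m : ℕ => ‖Polynomial.aeval w (SP q (2 * m + 6))‖) atTop
      (𝓝 ‖gC q w‖) := by
    intro w
    simp_rw [SP_aeval]
    have := (summable_complex h0 h1 w).hasSum.tendsto_sum_nat
    refine (this.comp (tendsto_atTop_mono (fun j => ?_) tendsto_id)).norm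
    simp only [id]; omega
  by_contra hv
  obtain ⟨u, v⟩ := z
  simp only at hv
  have hzero : ∀ w : ℝ, |w| ≤ |v| → gC q ⟨u, w⟩ = 0 := by
    intro w hw
    have := le_of_tendsto_of_tendsto' (hlim ⟨u, w⟩) (hlim ⟨u, v⟩)
      (fun m => splits_norm_mono _ (hsp m) u v w hw)
    rw [hz, norm_zero] at this
    exact norm_le_zero_iff.mp this
  have han : AnalyticOnNhd ℂ (gC q) Set.univ :=
    (differentiable_gC h0 h1).differentiableOn.analyticOnNhd isOpen_univ
  have hfreq : ∃ᶠ w in 𝓝[≠] (u : ℂ), gC q w = (fun _ => (0 : ℂ)) w := by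
    have ht : Tendsto (fun t : ℝ => (u : ℂ) + t * Complex.I) (𝓝[≠] 0) (𝓝[≠] (u : ℂ)) := by
      refine tendsto_nhdsWithin_iff.mpr ⟨?_, ?_⟩
      · have : Continuous (fun t : ℝ => (u : ℂ) + t * Complex.I) := by fun_prop
        have := this.tendsto 0
        simp at this
        exact this.mono_left nhdsWithin_le_nhds
      · filter_upwards [self_mem_nhdsWithin] with t ht
        simpa using ht
    refine ht.frequently (Eventually.frequently ?_)
    have : ∀ᶠ t : ℝ in 𝓝 0, |t| < |v| := by
      have : Continuous (fun t : ℝ => |t|) := continuous_abs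
      have := this.tendsto 0
      exact this.eventually (gt_mem_nhds (by simpa using hv))
    filter_upwards [this.filter_mono nhdsWithin_le_nhds] with t ht
    have := hzero t ht.le
    rw [← this]
    congr 1
    apply Complex.ext <;> simp
  have := han.eq_of_frequently_eq analyticOnNhd_const hfreq
  have := congrFun this 0
  rw [gC_zero] at this
  exact one_ne_zero this

end PTheta

namespace PTheta

open Filter Topology

/-- maximum principle on a disc -/
lemma max_disc {f : ℂ → ℂ} (hf : Differentiable ℂ f) {R M : ℝ} (hR : 0 < R)
    (h : ∀ z, ‖z‖ = R → ‖f z‖ ≤ M) (z : ℂ) (hz : ‖z‖ ≤ R) : ‖f z‖ ≤ M := by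
  refine Complex.norm_le_of_forall_mem_frontier_norm_le (U := Metric.ball 0 R)
    Metric.isBounded_ball hf.diffContOnCl (fun w hw => ?_) ?_
  · rw [frontier_ball _ hR.ne'] at hw
    exact h w (by simpa using hw)
  · rw [closure_ball _ hR.ne']
    simpa using hz

lemma coeff_le (k : ℕ) : ∀ (c : ℕ → ℂ) (_ : ∀ R : ℝ, Summable (fun k => ‖c k‖ * R ^ k)) (δ : ℝ)
    (_ : ∀ z : ℂ, ‖z‖ = 1 → ‖∑' k, c k * z ^ k‖ ≤ δ), ‖c k‖ ≤ 2 ^ k * δ := by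
  have hzero : ∀ (c : ℕ → ℂ) (_ : ∀ R : ℝ, Summable (fun k => ‖c k‖ * R ^ k)) (δ : ℝ)
    (_ : ∀ z : ℂ, ‖z‖ = 1 → ‖∑' k, c k * z ^ k‖ ≤ δ), ‖c 0‖ ≤ δ := by
    intro c hc δ h
    have := max_disc (differentiable_series hc) one_pos h 0 (by simp)
    rw [tsum_eq_single 0 (fun k hk => by simp [hk])] at this
    simpa using this
  induction k with
  | zero => intro c hc δ h; simpa using hzero c hc δ h
  | succ k ih =>
    intro c hc δ h
    have h0 := hzero c hc δ h
    have := ih (fun k => c (k + 1)) ?_ (2 * δ) ?_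
    · calc _ ≤ _ := this
        _ = _ := by ring
    · intro R
      have h1 := (summable_nat_add_iff 1).mpr (hc (max R 1))
      have h2 := (summable_nat_add_iff 1).mpr (hc (|R| + 1))
      refine Summable.of_norm_bounded h2 fun j => ?_
      rw [norm_mul, norm_norm, norm_pow, Real.norm_eq_abs]
      gcongr
      calc |R| ^ j ≤ (|R| + 1) ^ j := by gcongr; linarith
        _ ≤ (|R| + 1) ^ (j + 1) := pow_le_pow_right₀ (by linarith [abs_nonneg R]) (by omega)
    · intro z hz
      have hs : Summable (fun k => c k * z ^ k) := by
        refine Summable.of_norm ?_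
        have := hc 1
        refine this.congr fun j => ?_
        rw [norm_mul, norm_pow, hz]
      have e := hs.tsum_eq_zero_add
      have e2 : ∑' j, c (j + 1) * z ^ (j + 1) = z * ∑' j, c (j + 1) * z ^ j := by
        rw [← tsum_mul_left]
        refine tsum_congr fun j => ?_
        ring
      rw [e2] at e
      have e3 : z * ∑' j, c (j + 1) * z ^ j = (∑' k, c k * z ^ k) - c 0 := by
        rw [e]; simp
      calc ‖∑' j, c (j + 1) * z ^ j‖ = ‖z * ∑' j, c (j + 1) * z ^ j‖ := by
            rw [norm_mul, hz, one_mul]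
        _ ≤ ‖∑' k, c k * z ^ k‖ + ‖c 0‖ := by rw [e3]; exact norm_sub_le _ _
        _ ≤ 2 * δ := by linarith [h z hz]

noncomputable def PM (s : Multiset ℝ) (z : ℂ) : ℂ := (s.map (fun r : ℝ => 1 + z / (r : ℂ))).prod

lemma PM_cons (r : ℝ) (s : Multiset ℝ) (z : ℂ) : PM (r ::ₘ s) z = (1 + z / r) * PM s z := by
  simp [PM]

lemma PM_zero (s : Multiset ℝ) : PM s 0 = 1 := by simp [PM]

lemma PM_diff (s : Multiset ℝ) : Differentiable ℂ (PM s) := by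
  induction s using Multiset.induction with
  | empty => have : PM 0 = fun _ => 1 := by funext z; simp [PM]
             rw [this]; fun_prop
  | cons r s ih =>
    have : PM (r ::ₘ s) = fun z => (1 + z / r) * PM s z := by funext z; rw [PM_cons]
    rw [this]; fun_prop

lemma PM_lower {ρ : ℝ} (hρ : 0 < ρ) (s : Multiset ℝ) (hs : ∀ r ∈ s, 0 < r ∧ r ≤ ρ) (z : ℂ)
    (hz : ‖z‖ = 3 * ρ) : 2 ^ s.card ≤ ‖PM s z‖ := by
  induction s using Multiset.induction with
  | empty => simp [PM]
  | cons r s ih =>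
    rw [PM_cons, norm_mul, Multiset.card_cons, pow_succ']
    have h1 := ih fun t ht => hs t (Multiset.mem_cons_of_mem ht)
    have ⟨h2, h3⟩ := hs r (Multiset.mem_cons_self r s)
    have : 2 ≤ ‖1 + z / (r : ℂ)‖ := by
      have h4 : ‖z / (r : ℂ)‖ - ‖(1 : ℂ)‖ ≤ ‖1 + z / (r : ℂ)‖ := by
        have := norm_sub_norm_le (z / (r : ℂ)) (-1)
        rw [norm_neg] at this
        calc _ ≤ _ := this
          _ = _ := by congr 1; ring
      have h5 : 3 ≤ ‖z / (r : ℂ)‖ := by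
        rw [norm_div, hz, Complex.norm_real, Real.norm_eq_abs, abs_of_pos h2, le_div_iff₀ h2]
        linarith
      rw [norm_one] at h4
      linarith
    gcongr

lemma factor_bound {f G : ℂ → ℂ} (hG : Differentiable ℂ G) {ρ M : ℝ} (hρ : 0 < ρ)
    (hM : ∀ z, ‖z‖ = 3 * ρ → ‖f z‖ ≤ M) (s : Multiset ℝ) (hs : ∀ r ∈ s, 0 < r ∧ r ≤ ρ)
    (hfac : ∀ z, f z = PM s z * G z) (z : ℂ) (hz : ‖z‖ ≤ 3 * ρ) : ‖G z‖ ≤ M / 2 ^ s.card := by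
  refine max_disc hG (by positivity : 0 < 3 * ρ) (fun w hw => ?_) z hz
  have h1 := PM_lower hρ s hs w hw
  have h2 := hM w hw
  rw [hfac, norm_mul] at h2
  rw [le_div_iff₀ (by positivity)]
  calc ‖G w‖ * 2 ^ s.card ≤ ‖G w‖ * ‖PM s w‖ := by gcongr
    _ ≤ M := by linarith

lemma exists_factor {f : ℂ → ℂ} (hf : Differentiable ℂ f) (hf0 : f 0 = 1) {R₀ ρ M : ℝ}
    (hR : 0 < R₀) (hρ : 0 < ρ) (hM : ∀ z, ‖z‖ = 3 * ρ → ‖f z‖ ≤ M)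
    (hz : ∀ z, f z = 0 → ∃ r : ℝ, R₀ ≤ r ∧ z = -(r : ℂ)) :
    ∃ (s : Multiset ℝ) (G : ℂ → ℂ), (∀ r ∈ s, R₀ ≤ r) ∧ Differentiable ℂ G ∧
      (∀ z, f z = PM s z * G z) ∧ (∀ z, ‖z‖ ≤ ρ → G z ≠ 0) ∧ ∀ z, ‖z‖ ≤ 3 * ρ → ‖G z‖ ≤ M := by
  let D : Multiset ℝ → Prop := fun s => (∀ r ∈ s, R₀ ≤ r ∧ r ≤ ρ) ∧
    ∃ G : ℂ → ℂ, Differentiable ℂ G ∧ ∀ z, f z = PM s z * G z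
  let A : Set ℕ := {n | ∃ s, D s ∧ s.card = n}
  have hA : A.Nonempty := ⟨0, 0, ⟨by simp, f, hf, fun z => by simp [PM]⟩, by simp⟩
  have hbd : BddAbove A := by
    obtain ⟨N, hN⟩ := pow_unbounded_of_one_lt M (one_lt_two (α := ℝ))
    refine ⟨N, ?_⟩
    rintro n ⟨s, ⟨hs, G, hG, hfac⟩, rfl⟩
    have h1 := factor_bound hG hρ hM s (fun r hr => ⟨hR.trans_le (hs r hr).1, (hs r hr).2⟩) hfac 0
      (by simp; positivity)
    have h2 : G 0 = 1 := by
      have := hfac 0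
      rw [hf0, PM_zero, one_mul] at this
      exact this.symm
    rw [h2, norm_one, le_div_iff₀ (by positivity), one_mul] at h1
    by_contra h
    have : (2 : ℝ) ^ N ≤ 2 ^ s.card := pow_le_pow_right₀ (by norm_num) (by omega)
    linarith
  obtain ⟨s, ⟨hs, G, hG, hfac⟩, hcard⟩ := Nat.sSup_mem hA hbd
  refine ⟨s, G, fun r hr => (hs r hr).1, hG, hfac, ?_, ?_⟩
  · intro w hw hGw
    have hfw : f w = 0 := by rw [hfac, hGw, mul_zero]
    obtain ⟨r, hr, rfl⟩ := hz w hfw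
    have hr0 : 0 < r := hR.trans_le hr
    have hrρ : r ≤ ρ := by
      rwa [norm_neg, Complex.norm_real, Real.norm_eq_abs, abs_of_pos hr0] at hw
    have hrc : (r : ℂ) ≠ 0 := by exact_mod_cast hr0.ne'
    have hds : Differentiable ℂ (dslope G (-(r : ℂ))) := by
      have := (Complex.differentiableOn_dslope (f := G) (s := Set.univ) (c := -(r : ℂ))
        univ_mem).mpr hG.differentiableOn
      exact differentiableOn_univ.mp this
    have hD : D (r ::ₘ s) := by
      refine ⟨?_, fun z => r * dslope G (-(r : ℂ)) z, by fun_prop, ?_⟩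
      · intro t ht
        rcases Multiset.mem_cons.mp ht with rfl | ht
        · exact ⟨hr, hrρ⟩
        · exact hs t ht
      · intro z
        have h1 := sub_smul_dslope G (-(r : ℂ)) z
        rw [hGw, sub_zero, smul_eq_mul] at h1
        rw [hfac, PM_cons, ← h1]
        field_simp
        ring
    have : (r ::ₘ s).card ≤ sSup A := le_csSup hbd ⟨_, hD, rfl⟩
    rw [← hcard, Multiset.card_cons] at this
    omega
  · intro z hz'
    have h1 := factor_bound hG hρ hM s (fun r hr => ⟨hR.trans_le (hs r hr).1, (hs r hr).2⟩) hfac z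
      hz'
    have hM0 : 0 ≤ M := by
      have := hM (3 * ρ : ℝ) (by
        rw [Complex.norm_real, Real.norm_eq_abs, abs_of_pos (by positivity)])
      exact (norm_nonneg _).trans this
    exact h1.trans (div_le_self hM0 (one_le_pow₀ (by norm_num)))

lemma log_bound {G : ℂ → ℂ} (hG : Differentiable ℂ G) (hG0 : G 0 = 1) {ρ M : ℝ} (hρ : 1 < ρ)
    (hM1 : 1 < M) (hne : ∀ z, ‖z‖ ≤ ρ → G z ≠ 0) (hM : ∀ z, ‖z‖ ≤ ρ → ‖G z‖ ≤ M) (z : ℂ)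
    (hz : ‖z‖ ≤ 1) : ∃ h : ℂ, G z = Complex.exp h ∧ ‖h‖ ≤ 2 * Real.log M / (ρ - 1) := by
  have hd : DifferentiableOn ℂ (fun z => deriv G z / G z) (Metric.ball 0 ρ) := by
    refine DifferentiableOn.div ?_ hG.differentiableOn fun w hw => hne w ?_
    · exact (hG.differentiableOn (s := Set.univ)).deriv isOpen_univ |>.mono (Set.subset_univ _)
    · exact (mem_ball_zero_iff.mp hw).le
  obtain ⟨H, hH0, hH⟩ := hd.isExactOn_ball.with_val_at 0 0
  have hexp : ∀ w ∈ Metric.ball (0 : ℂ) ρ, G w = Complex.exp (H w) := by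
    have hder : ∀ w ∈ Metric.ball (0 : ℂ) ρ,
        HasDerivAt (fun w => G w * Complex.exp (-H w)) 0 w := by
      intro w hw
      have h1 := (hG w).hasDerivAt
      have h2 := (hH w hw).neg.cexp
      have h3 := h1.mul h2
      have hn := hne w (mem_ball_zero_iff.mp hw).le
      have e : deriv G w * Complex.exp (-H w) +
          G w * (Complex.exp (-H w) * -(deriv G w / G w)) = 0 := by
        field_simp
        ring
      exact e ▸ h3
    intro w hw
    have hconst := Metric.isOpen_ball.is_const_of_deriv_eq_zero
      (convex_ball (0 : ℂ) ρ).isPreconnected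
      (fun w hw => (hder w hw).differentiableAt.differentiableWithinAt)
      (fun w hw => (hder w hw).deriv) hw (Metric.mem_ball_self (by linarith) : (0:ℂ) ∈ _)
    simp only [hH0, hG0, neg_zero, Complex.exp_zero, mul_one] at hconst
    rw [Complex.exp_neg] at hconst
    field_simp at hconst
    simpa using hconst
  have hlog : 0 < Real.log M := Real.log_pos hM1
  have hzb : z ∈ Metric.ball (0 : ℂ) ρ := mem_ball_zero_iff.mpr (hz.trans_lt hρ)
  have hbc := Complex.borelCaratheodory_zero (f := H) (R := ρ) hlog
    (fun w hw => (hH w hw).differentiableAt.differentiableWithinAt) (fun w hw => ?_)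
    (by linarith) hzb hH0
  · refine ⟨H z, hexp z hzb, hbc.trans ?_⟩
    have : 0 < ρ - 1 := by linarith
    calc 2 * Real.log M * ‖z‖ / (ρ - ‖z‖) ≤ 2 * Real.log M * 1 / (ρ - 1) := by gcongr
      _ = _ := by ring
  · have h1 := hM w (mem_ball_zero_iff.mp hw).le
    rw [hexp w hw, Complex.norm_exp] at h1
    exact (Real.le_log_iff_exp_le (by linarith)).mpr h1

lemma approx {q : ℝ} (h0 : 0 < q) (h1 : q < 1) {R₀ : ℝ} (hR : 0 < R₀)
    (hz : ∀ z, gC q z = 0 → ∃ r : ℝ, R₀ ≤ r ∧ z = -(r : ℂ)) {δ : ℝ} (hδ : 0 < δ) :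
    ∃ s : Multiset ℝ, (∀ r ∈ s, R₀ ≤ r) ∧ ∀ z : ℂ, ‖z‖ ≤ 1 → ‖PM s z - gC q z‖ ≤ δ := by
  set K := gR q 1 with hK
  have hK0 : 0 < K := gR_pos_of_nonneg h0 h1 zero_le_one
  set η := min 1 (δ / (2 * K)) with hη
  have hη0 : 0 < η := lt_min one_pos (by positivity)
  obtain ⟨C, hC1, hC⟩ := gR_growth h0 h1 (show 0 < η / 12 by positivity)
  have hlC : 0 ≤ Real.log C := Real.log_nonneg hC1
  set ρ := 4 * Real.log C / η + 3 with hρ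
  have hq0 : 0 ≤ 4 * Real.log C / η := by positivity
  have hρ3 : 3 ≤ ρ := by linarith
  set M := C * Real.exp (η / 12 * (3 * ρ)) with hMdef
  have hM1 : 1 < M := by
    have : 1 < Real.exp (η / 12 * (3 * ρ)) := Real.one_lt_exp_iff.mpr (by positivity)
    nlinarith
  have hlogM : Real.log M = Real.log C + η / 4 * ρ := by
    rw [hMdef, Real.log_mul (by linarith) (Real.exp_pos _).ne', Real.log_exp]; ring
  have hgM : ∀ z, ‖z‖ = 3 * ρ → ‖gC q z‖ ≤ M := by
    intro z hz
    refine (norm_gC_le h0 h1 z).trans ?_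
    rw [hz]
    exact hC _ (by positivity)
  obtain ⟨s, G, hs, hG, hfac, hne, hGM⟩ := exists_factor (differentiable_gC h0 h1) (gC_zero q) hR
    (by linarith) hgM hz
  refine ⟨s, hs, fun z hz1 => ?_⟩
  have hG0 : G 0 = 1 := by
    have := hfac 0
    rw [gC_zero, PM_zero, one_mul] at this
    exact this.symm
  obtain ⟨h, hGh, hh⟩ := log_bound hG hG0 (by linarith) hM1 hne
    (fun z hz => hGM z (by linarith)) z hz1
  have hhη : ‖h‖ ≤ η := by
    refine hh.trans ?_
    rw [div_le_iff₀ (by linarith), hlogM]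
    have : η * ρ = 4 * Real.log C + 3 * η := by rw [hρ]; field_simp
    nlinarith
  have hP : PM s z = gC q z * Complex.exp (-h) := by
    rw [hfac, hGh, mul_assoc, ← Complex.exp_add]; simp
  rw [hP, show gC q z * Complex.exp (-h) - gC q z = gC q z * (Complex.exp (-h) - 1) by ring,
    norm_mul]
  have h2 : ‖Complex.exp (-h) - 1‖ ≤ 2 * ‖-h‖ :=
    Complex.norm_exp_sub_one_le (by rw [norm_neg]; exact hhη.trans (min_le_left _ _))
  have h3 : ‖gC q z‖ ≤ K := by
    refine (norm_gC_le h0 h1 z).trans ?_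
    refine Summable.tsum_le_tsum (fun k => ?_) (summable_real h0 h1 _) (summable_real h0 h1 _)
    gcongr
  rw [norm_neg] at h2
  calc _ ≤ K * (2 * η) := by gcongr; linarith
    _ ≤ K * (2 * (δ / (2 * K))) := by gcongr; exact min_le_right _ _
    _ = δ := by field_simp

open Polynomial in
noncomputable def PP (s : Multiset ℝ) : ℝ[X] := (s.map (fun r : ℝ => 1 + C r⁻¹ * X)).prod

lemma PP_aeval (s : Multiset ℝ) (z : ℂ) : Polynomial.aeval z (PP s) = PM s z := by
  unfold PP PM
  rw [map_multiset_prod, Multiset.map_map]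
  congr 1
  refine Multiset.map_congr rfl fun r _ => ?_
  simp only [Function.comp, map_add, map_one, map_mul, Polynomial.aeval_C, Polynomial.aeval_X,
    Complex.coe_algebraMap, Complex.ofReal_inv]
  ring

lemma PP_coeffs (s : Multiset ℝ) {R₀ : ℝ} (hR : 0 < R₀) (hs : ∀ r ∈ s, R₀ ≤ r) (t : ℝ) :
    (PP s).coeff 0 = 1 ∧
    0 ≤ (PP s).coeff 1 - R₀ * ((PP s).coeff 1 ^ 2 - 2 * (PP s).coeff 2) ∧
    0 ≤ (PP s).coeff 1 * t ^ 2 - 2 * ((PP s).coeff 1 ^ 2 - 2 * (PP s).coeff 2) * t +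
      ((PP s).coeff 1 ^ 3 - 3 * (PP s).coeff 1 * (PP s).coeff 2 + 3 * (PP s).coeff 3) := by
  induction s using Multiset.induction with
  | empty => simp [PP, Polynomial.coeff_one]
  | cons r s ih =>
    obtain ⟨i0, i1, i2⟩ := ih fun t ht => hs t (Multiset.mem_cons_of_mem ht)
    have hr := hs r (Multiset.mem_cons_self r s)
    have hr0 : 0 < r := hR.trans_le hr
    have e : PP (r ::ₘ s) = PP s + Polynomial.C r⁻¹ * (Polynomial.X * PP s) := by
      simp [PP]; ring
    set u := r⁻¹ with hu
    have hu0 : 0 < u := by positivity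
    have hRu : R₀ * u ≤ 1 := by
      rw [hu, ← div_eq_mul_inv, div_le_one hr0]; exact hr
    have c0 : (PP (r ::ₘ s)).coeff 0 = 1 := by rw [e]; simp [i0]
    have c : ∀ n, (PP (r ::ₘ s)).coeff (n + 1) = (PP s).coeff (n + 1) + u * (PP s).coeff n := by
      intro n; rw [e]; simp [Polynomial.coeff_X_mul]
    have c1 := c 0
    have c2 := c 1
    have c3 := c 2
    norm_num at c1 c2 c3
    rw [i0] at c1
    rw [c1, c2, c3]
    refine ⟨c0, ?_, ?_⟩
    · have : 0 ≤ u * (1 - R₀ * u) := mul_nonneg hu0.le (by linarith)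
      calc 0 ≤ _ := add_nonneg i1 this
        _ = _ := by ring
    · have : 0 ≤ u * (t - u) ^ 2 := by positivity
      calc 0 ≤ _ := add_nonneg i2 this
        _ = _ := by ring

lemma PP_coeff_close {q : ℝ} (h0 : 0 < q) (h1 : q < 1) (s : Multiset ℝ) {δ : ℝ}
    (h : ∀ z : ℂ, ‖z‖ ≤ 1 → ‖PM s z - gC q z‖ ≤ δ) (k : ℕ) :
    |(PP s).coeff k - q ^ (k ^ 2)| ≤ 2 ^ k * δ := by
  have hfin : ∀ k ∉ (PP s).support, (PP s).coeff k = 0 := fun k hk =>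
    Polynomial.notMem_support_iff.mp hk
  have := coeff_le k (fun k => (((PP s).coeff k - q ^ (k ^ 2) : ℝ) : ℂ)) ?_ δ ?_
  · rwa [Complex.norm_real, Real.norm_eq_abs] at this
  · intro R
    have hs1 : Summable (fun k => |(PP s).coeff k| * |R| ^ k) :=
      summable_of_ne_finset_zero (s := (PP s).support) fun k hk => by simp [hfin k hk]
    have hs2 := hs1.add (summable_real h0 h1 |R|)
    refine Summable.of_norm_bounded hs2 fun k => ?_
    rw [norm_mul, norm_norm, norm_pow, Complex.norm_real, Real.norm_eq_abs, Real.norm_eq_abs,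
      ← add_mul]
    gcongr
    refine (abs_sub _ _).trans_eq ?_
    rw [abs_of_pos (by positivity : 0 < q ^ (k ^ 2))]
  · intro z hz
    have hP : HasSum (fun k => (((PP s).coeff k : ℝ) : ℂ) * z ^ k) (PM s z) := by
      have : HasSum (fun k => (((PP s).coeff k : ℝ) : ℂ) * z ^ k)
          (∑ k ∈ (PP s).support, (((PP s).coeff k : ℝ) : ℂ) * z ^ k) :=
        hasSum_sum_of_ne_finset_zero fun k hk => by simp [hfin k hk]
      convert this using 1
      rw [← PP_aeval, Polynomial.aeval_def, Polynomial.eval₂_eq_sum, Polynomial.sum]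
      rfl
    have hd := hP.sub (summable_complex h0 h1 z).hasSum
    have e : ∑' k, (((PP s).coeff k - q ^ (k ^ 2) : ℝ) : ℂ) * z ^ k = PM s z - gC q z := by
      rw [← show _ = PM s z - gC q z from hd.tsum_eq]
      refine tsum_congr fun k => ?_
      push_cast; ring
    rw [e]
    exact h z hz.le

theorem no_far_zeros {q : ℝ} (h0 : 0 < q) (h1 : q < 1) {R₀ : ℝ} (hR : 1 < q ^ 3 * R₀)
    (hz : ∀ z, gC q z = 0 → ∃ r : ℝ, R₀ ≤ r ∧ z = -(r : ℂ)) : False := by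
  have hR0 : 0 < R₀ := by
    by_contra h
    have : q ^ 3 * R₀ ≤ 0 := mul_nonpos_of_nonneg_of_nonpos (by positivity) (not_lt.mp h)
    linarith
  have hex : ∀ n : ℕ, ∃ s : Multiset ℝ, (∀ r ∈ s, R₀ ≤ r) ∧
      ∀ z : ℂ, ‖z‖ ≤ 1 → ‖PM s z - gC q z‖ ≤ 1 / ((n : ℝ) + 1) :=
    fun n => approx h0 h1 hR0 hz (by positivity)
  choose s hs hsz using hex
  have hlim : ∀ k : ℕ, Tendsto (fun n => (PP (s n)).coeff k) atTop (𝓝 (q ^ (k ^ 2))) := by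
    intro k
    rw [tendsto_iff_dist_tendsto_zero]
    have h2 : Tendsto (fun n : ℕ => 2 ^ k * (1 / ((n : ℝ) + 1))) atTop (𝓝 0) := by
      simpa using (tendsto_one_div_add_atTop_nhds_zero_nat (𝕜 := ℝ)).const_mul (2 ^ k)
    refine squeeze_zero (fun n => dist_nonneg) (fun n => ?_) h2
    rw [Real.dist_eq]
    exact PP_coeff_close h0 h1 (s n) (hsz n) k
  have l1 := hlim 1
  have l2 := hlim 2
  have l3 := hlim 3
  norm_num at l1 l2 l3
  set t := q - 2 * q ^ 3 with ht
  have I1 : 0 ≤ q - R₀ * (q ^ 2 - 2 * q ^ 4) :=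
    ge_of_tendsto' (l1.sub (((l1.pow 2).sub (l2.const_mul 2)).const_mul R₀))
      fun n => (PP_coeffs (s n) hR0 (hs n) t).2.1
  have I2 : 0 ≤ q * t ^ 2 - 2 * (q ^ 2 - 2 * q ^ 4) * t + (q ^ 3 - 3 * q * q ^ 4 + 3 * q ^ 9) :=
    ge_of_tendsto' (((l1.mul_const (t ^ 2)).sub
      ((((l1.pow 2).sub (l2.const_mul 2)).const_mul 2).mul_const t)).add
      (((l1.pow 3).sub ((l1.const_mul 3).mul l2)).add (l3.const_mul 3)))
      fun n => (PP_coeffs (s n) hR0 (hs n) t).2.2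
  have e2 : q * t ^ 2 - 2 * (q ^ 2 - 2 * q ^ 4) * t + (q ^ 3 - 3 * q * q ^ 4 + 3 * q ^ 9)
      = q ^ 5 * (1 - q ^ 2) * (1 - 3 * q ^ 2) := by rw [ht]; ring
  rw [e2] at I2
  have hq2 : q ^ 2 < 1 := pow_lt_one₀ h0.le h1 (by norm_num)
  have h3 : 0 ≤ 1 - 3 * q ^ 2 := nonneg_of_mul_nonneg_right I2
    (mul_pos (by positivity) (by linarith))
  have h4 : 0 ≤ q ^ 2 - q ^ 3 * R₀ * (1 - 2 * q ^ 2) := by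
    have := mul_nonneg h0.le I1
    calc 0 ≤ _ := this
      _ = _ := by ring
  have h5 : 1 * (1 - 2 * q ^ 2) < q ^ 3 * R₀ * (1 - 2 * q ^ 2) := by
    gcongr; nlinarith
  linarith

theorem point_of_real_zeros {q b : ℝ} (h0 : 0 < q) (h1 : q < 1) (hb : q * b = 1)
    (hz : ∀ z, gC q z = 0 → z.im = 0) : ∃ y, b < y ∧ y < b ^ 3 ∧ gR q (-y) ≤ 0 := by
  by_contra! hcon
  have hb3 : q ^ 3 * b ^ 3 = 1 := by rw [← mul_pow, hb, one_pow]
  have hp := gR_pos_cube h0 h1 hb3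
  have hc : Continuous (fun y => gR q (-y)) := (continuous_gR h0 h1).comp continuous_neg
  obtain ⟨ε, hε, hball⟩ := Metric.eventually_nhds_iff.mp
    ((hc.tendsto (b ^ 3)).eventually (lt_mem_nhds hp))
  refine no_far_zeros h0 h1 (R₀ := b ^ 3 + ε) ?_ fun z hzz => ?_
  · have : 0 < q ^ 3 * ε := by positivity
    linarith
  · have him := hz z hzz
    have hzx : z = ((z.re : ℝ) : ℂ) := by apply Complex.ext <;> simp [him]
    refine ⟨-z.re, ?_, by rw [hzx]; simp⟩
    set y := -z.re with hy
    have hgy : gR q (-y) = 0 := by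
      rw [hzx, gC_ofReal] at hzz
      rw [hy, neg_neg]
      exact_mod_cast hzz
    by_contra! hlt
    rcases le_or_gt y 0 with h | h
    · have := gR_pos_of_nonneg h0 h1 (show 0 ≤ -y by linarith)
      linarith
    rcases le_or_gt y b with h2 | h2
    · have := gR_pos_small h0 h1 h.le (by rw [← hb]; gcongr)
      linarith
    rcases lt_or_ge y (b ^ 3) with h3 | h3
    · have := hcon y h2 h3
      linarith
    · have := hball (y := y) (by rw [Real.dist_eq, abs_of_nonneg] <;> linarith)
      linarith

end PTheta

theorem stmt7 (a : ℝ) (ha : 1 < a) :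
    (∀ z : ℂ, (∑' k : ℕ, (a : ℂ) ^ (-(k ^ 2 : ℤ)) * z ^ k) = 0 → z.im = 0) ↔
      ∃ x : ℝ, x ∈ Set.Ioo (-a ^ 3) (-a) ∧
        (∑' k : ℕ, a ^ (-(k ^ 2 : ℤ)) * x ^ k) ≤ 0 := by
  have ha0 : 0 < a := by linarith
  have h0 : 0 < a⁻¹ := inv_pos.mpr ha0
  have h1 : a⁻¹ < 1 := inv_lt_one_of_one_lt₀ ha
  have hb : a⁻¹ * a = 1 := inv_mul_cancel₀ ha0.ne'
  have eR : ∀ x : ℝ, (∑' k : ℕ, a ^ (-(k ^ 2 : ℤ)) * x ^ k) = PTheta.gR a⁻¹ x := by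
    intro x
    refine tsum_congr fun k => ?_
    rw [zpow_neg, inv_pow]
    norm_cast
  have eC : ∀ z : ℂ, (∑' k : ℕ, (a : ℂ) ^ (-(k ^ 2 : ℤ)) * z ^ k) = PTheta.gC a⁻¹ z := by
    intro z
    refine tsum_congr fun k => ?_
    rw [zpow_neg, Complex.ofReal_inv, inv_pow]
    norm_cast
  simp_rw [eR, eC]
  constructor
  · intro hz
    obtain ⟨y, hy1, hy2, hy3⟩ := PTheta.point_of_real_zeros h0 h1 hb hz
    exact ⟨-y, ⟨by linarith, by linarith⟩, hy3⟩
  · rintro ⟨x, ⟨hx1, hx2⟩, hx⟩ z hz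
    exact PTheta.real_zeros_of_point h0 h1 hb (y₀ := -x) (by linarith) (by linarith)
      (by rwa [neg_neg]) z hz
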